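/- Let M and N be transitive models of ZFC⁻ and let π : M → N be elementary. Suppose α is an ordinal of M such that sup π"α = α and π is continuous at cof^M(α). Then π(α) = α. -/

import Mathlib

/- ## A framework for transitive class/set models of fragments of ZFC,
     inside the universe `ZFSet` of ZF sets. -/

open FirstOrder FirstOrder.Language

/-- The language of set theory: a single binary relation symbol `∈`. -/
inductive SetMemRel : ℕ → Type
  | mem : SetMemRel 2

/-- The first-order language of set theory. -/
def setL : FirstOrder.Language := ⟨fun _ => Empty, SetMemRel⟩

/-- Evaluation of a term of the language of set theory (terms are just variables). -/
def tval {n : ℕ} (v : Fin n → ZFSet) : setL.Term (Empty ⊕ Fin n) → ZFSet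
  | .var (Sum.inl e) => e.elim
  | .var (Sum.inr i) => v i
  | .func f _ => f.elim

/-- Tarskian satisfaction of a formula of the language of set theory in a class `S` of
ZF-sets (equipped with true membership), under the assignment `v`. -/
def ZSat (S : Set ZFSet) : ∀ {n : ℕ}, setL.BoundedFormula Empty n → (Fin n → ZFSet) → Prop
  | _, .falsum, _ => False
  | _, .equal t u, v => tval v t = tval v u
  | _, .rel R ts, v =>
      match R with
      | SetMemRel.mem => tval v (ts 0) ∈ tval v (ts 1)
  | _, .imp φ ψ, v => ZSat S φ v → ZSat S ψ v
  | _, .all φ, v => ∀ x ∈ S, ZSat S φ (Fin.snoc v x)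

/-- Satisfaction of a sentence in a class of ZF-sets. -/
def SatS (S : Set ZFSet) (σ : setL.Sentence) : Prop := ZSat S σ finZeroElim

/-- A class of ZF-sets is transitive. -/
def IsTransClass (S : Set ZFSet) : Prop := ∀ x ∈ S, ∀ y ∈ x, y ∈ S

/-- `r` is a well-ordering of the set `x`, from the point of view of the class `S`
(Kuratowski pairs code the relation; minimality is required for nonempty subsets of `x`
lying in `S`). -/
def WellOrders (S : Set ZFSet) (r x : ZFSet) : Prop :=
  (∀ a ∈ x, ZFSet.pair a a ∉ r) ∧
  (∀ a ∈ x, ∀ b ∈ x, ∀ c ∈ x, ZFSet.pair a b ∈ r → ZFSet.pair b c ∈ r → ZFSet.pair a c ∈ r) ∧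
  (∀ a ∈ x, ∀ b ∈ x, a ≠ b → (ZFSet.pair a b ∈ r ∨ ZFSet.pair b a ∈ r)) ∧
  (∀ y ∈ S, (∀ z ∈ y, z ∈ x) → y ≠ ∅ → ∃ m ∈ y, ∀ z ∈ y, ZFSet.pair z m ∉ r)

/-- `S` is a transitive model of ZFC⁻, i.e. of ZFC stated with the Replacement Scheme and
the Well-Ordering Theorem but without the Power Set Axiom.  (Extensionality and Foundation
are automatic for transitive classes of ZF-sets.) -/
def ModelsZFCminus (S : Set ZFSet) : Prop :=
  IsTransClass S ∧
  (∅ : ZFSet) ∈ S ∧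
  (∀ x ∈ S, ∀ y ∈ S, ({x, y} : ZFSet) ∈ S) ∧
  (∀ x ∈ S, (ZFSet.sUnion x : ZFSet) ∈ S) ∧
  ZFSet.omega ∈ S ∧
  (∀ (n : ℕ) (φ : setL.BoundedFormula Empty (n + 1)) (p : Fin n → ZFSet),
    (∀ i, p i ∈ S) → ∀ a ∈ S, ∃ b ∈ S, ∀ y, y ∈ b ↔ (y ∈ a ∧ ZSat S φ (Fin.snoc p y))) ∧
  (∀ (n : ℕ) (φ : setL.BoundedFormula Empty (n + 2)) (p : Fin n → ZFSet),
    (∀ i, p i ∈ S) → ∀ a ∈ S,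
      (∀ x ∈ a, ∃! y, y ∈ S ∧ ZSat S φ (Fin.snoc (Fin.snoc p x) y)) →
      ∃ b ∈ S, ∀ y, y ∈ b ↔ ∃ x ∈ a, y ∈ S ∧ ZSat S φ (Fin.snoc (Fin.snoc p x) y)) ∧
  (∀ x ∈ S, ∃ r ∈ S, WellOrders S r x)

/-- `S` is a transitive model of ZFC. -/
def ModelsZFC (S : Set ZFSet) : Prop :=
  ModelsZFCminus S ∧ ∀ x ∈ S, ∃ p ∈ S, ∀ y, y ∈ p ↔ (y ∈ S ∧ y ⊆ x)

/-- `f` is (the graph of) a surjection of `a` onto `b`. -/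
def SurjFun (f a b : ZFSet) : Prop :=
  ZFSet.IsFunc a b f ∧ ∀ y ∈ b, ∃ x ∈ a, ZFSet.pair x y ∈ f

/-- `f` is (the graph of) an injection of `a` into `b`. -/
def InjFun (f a b : ZFSet) : Prop :=
  ZFSet.IsFunc a b f ∧ ∀ x ∈ a, ∀ x' ∈ a, ∀ y, ZFSet.pair x y ∈ f → ZFSet.pair x' y ∈ f → x = x'

/-- `f` is (the graph of) a cofinal function from `β` into the ordinal `α`. -/
def CofinalFun (f β α : ZFSet) : Prop :=
  ZFSet.IsFunc β α f ∧ ∀ ξ ∈ α, ∃ η ∈ β, ∃ ζ, ZFSet.pair η ζ ∈ f ∧ (ξ ∈ ζ ∨ ξ = ζ)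

/-- `μ = cof(α)` as computed inside the class `S` (for `S = Set.univ`, the true cofinality). -/
def IsCofOf (S : Set ZFSet) (α μ : ZFSet) : Prop :=
  μ ∈ S ∧ μ.IsOrdinal ∧ (∃ f ∈ S, CofinalFun f μ α) ∧
  ∀ ν ∈ S, ZFSet.IsOrdinal ν → (∃ f ∈ S, CofinalFun f ν α) → μ ⊆ ν

/-- `κ` is a cardinal from the point of view of the class `S`
(for `S = Set.univ`, a true cardinal). -/
def IsCardIn (S : Set ZFSet) (κ : ZFSet) : Prop :=
  κ.IsOrdinal ∧ ∀ α ∈ κ, ∀ f ∈ S, ¬ SurjFun f α κ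

/-- `μ` is an (infinite) regular cardinal from the point of view of the class `S`. -/
def IsRegularIn (S : Set ZFSet) (μ : ZFSet) : Prop :=
  ZFSet.omega ⊆ μ ∧ IsCardIn S μ ∧ IsCofOf S μ μ

/-- `ν = μ⁺`, the cardinal successor of `μ`, as computed in the class `S`. -/
def CardSuccIn (S : Set ZFSet) (μ ν : ZFSet) : Prop :=
  ν ∈ S ∧ IsCardIn S ν ∧ μ ∈ ν ∧ ∀ ξ ∈ S, IsCardIn S ξ → μ ∈ ξ → ν ⊆ ξ

/-- `μ` is the largest cardinal of the model `S`. -/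
def IsLargestCardIn (S : Set ZFSet) (μ : ZFSet) : Prop :=
  μ ∈ S ∧ IsCardIn S μ ∧ ∀ x ∈ S, IsCardIn S x → x ⊆ μ

/-- `α = sup A`, for `A` a collection of ordinals: `α` is the least ordinal above all of them. -/
def IsSupOf (α : ZFSet) (A : Set ZFSet) : Prop :=
  α.IsOrdinal ∧ (∀ a ∈ A, a ⊆ α) ∧ ∀ β : ZFSet, β.IsOrdinal → (∀ a ∈ A, a ⊆ β) → α ⊆ β

/-- `π` is an elementary embedding (for the language of set theory) from the class `S`
into the class `T`. -/
def IsElem (S T : Set ZFSet) (π : ZFSet → ZFSet) : Prop :=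
  (∀ x ∈ S, π x ∈ T) ∧
  ∀ (n : ℕ) (φ : setL.BoundedFormula Empty n) (v : Fin n → ZFSet),
    (∀ i, v i ∈ S) → (ZSat S φ v ↔ ZSat T φ (fun i => π (v i)))

/-!
A cofinal map `f : γ → α` in `M`, where `γ = cof^M(α)`, is sent to a cofinal map `π f : π γ → π α`.
By continuity at `γ`, every `η ∈ π γ` lies in `π β` for some `β ∈ γ`. Since `β` is smaller than
the cofinality of `α`, `f` maps `β` into some `δ ∈ α`, so `π f` maps `π β` into `π δ`. Thus the
values of `π f` are bounded by the ordinals `π δ`, which are therefore cofinal in `π α`: `π` is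
continuous at `α`. Everything transferred along `π` is a `Δ₀` statement, hence absolute for
transitive classes.
-/

universe u

/-- The `Δ₀` relations on `ZFSet`: those defined by a formula of set theory all of whose quantifiers
are bounded. They are represented semantically, the body `Q` of a bounded quantifier being a
relation in one more variable, the last one. -/
inductive IsDeltaZero : ∀ {n : ℕ}, ((Fin n → ZFSet.{u}) → Prop) → Prop
  | falsum {n : ℕ} : IsDeltaZero fun _ : Fin n → ZFSet.{u} => False
  | mem {n : ℕ} (i j : Fin n) : IsDeltaZero fun v => v i ∈ v j
  | eq {n : ℕ} (i j : Fin n) : IsDeltaZero fun v => v i = v j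
  | imp {n : ℕ} {P Q : (Fin n → ZFSet.{u}) → Prop} (hP : IsDeltaZero P) (hQ : IsDeltaZero Q) :
      IsDeltaZero fun v => P v → Q v
  | ball {n : ℕ} (i : Fin n) {Q : (Fin n → ZFSet.{u}) → ZFSet.{u} → Prop}
      (hQ : IsDeltaZero fun w : Fin (n + 1) → ZFSet.{u} => Q (Fin.init w) (w (Fin.last n))) :
      IsDeltaZero fun v => ∀ x ∈ v i, Q v x

/-- `π` is a `Δ₀`-elementary embedding of the class `S` into the universe. By absoluteness, for a
transitive class `T` containing the range of `π` this is `Δ₀`-elementarity of `π : S → T`. -/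
def IsDeltaZeroElem (S : Set ZFSet.{u}) (π : ZFSet.{u} → ZFSet.{u}) : Prop :=
  ∀ ⦃n : ℕ⦄ ⦃P : (Fin n → ZFSet.{u}) → Prop⦄, IsDeltaZero P →
    ∀ v : Fin n → ZFSet.{u}, (∀ i, v i ∈ S) → (P v ↔ P fun i => π (v i))

/-- The class `S` satisfies the `Δ₀` Separation Schema, with parameters `p`. As with
`IsDeltaZeroElem`, the relations are evaluated in the universe. -/
def HasDeltaZeroSeparation (S : Set ZFSet.{u}) : Prop :=
  ∀ ⦃n : ℕ⦄ ⦃P : (Fin (n + 1) → ZFSet.{u}) → Prop⦄, IsDeltaZero P →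
    ∀ p : Fin n → ZFSet.{u}, (∀ i, p i ∈ S) → ∀ a ∈ S, ZFSet.sep (fun y => P (Fin.snoc p y)) a ∈ S

theorem forall_snoc_mem {n : ℕ} {S : Set ZFSet.{u}} {v : Fin n → ZFSet.{u}} {x : ZFSet.{u}}
    (hv : ∀ i, v i ∈ S) (hx : x ∈ S) (i : Fin (n + 1)) :
    (Fin.snoc v x : Fin (n + 1) → ZFSet.{u}) i ∈ S := by
  induction i using Fin.lastCases with
  | last => simpa using hx
  | cast i => simpa using hv i

theorem cofinalFun_iff_bounded {f β α : ZFSet.{u}} :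
    CofinalFun f β α ↔
      (∀ p ∈ f, ∃ η ∈ β, ∃ ζ ∈ α, p = ZFSet.pair η ζ) ∧
      (∀ η ∈ β, ∃ ζ ∈ α, ZFSet.pair η ζ ∈ f ∧ ∀ ζ' ∈ α, ZFSet.pair η ζ' ∈ f → ζ' = ζ) ∧
      ∀ ξ ∈ α, ∃ η ∈ β, ∃ ζ ∈ α, ZFSet.pair η ζ ∈ f ∧ (ξ ∈ ζ ∨ ξ = ζ) := by
  have hsub : f ⊆ β.prod α ↔ ∀ p ∈ f, ∃ η ∈ β, ∃ ζ ∈ α, p = ZFSet.pair η ζ := by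
    simp only [ZFSet.subset_def, ZFSet.mem_prod]
  rw [CofinalFun, ZFSet.IsFunc, and_assoc, ← hsub]
  refine and_congr_right fun hf => ?_
  have mem_of_pair {η ζ : ZFSet.{u}} (h : ZFSet.pair η ζ ∈ f) : ζ ∈ α :=
    (ZFSet.pair_mem_prod.1 (hf h)).2
  refine and_congr (forall₂_congr fun η _ => ⟨?_, ?_⟩)
    (forall₂_congr fun ξ _ => exists_congr fun η => and_congr_right fun _ =>
      exists_congr fun ζ => ⟨fun h => ⟨mem_of_pair h.1, h⟩, And.right⟩)
  · rintro ⟨ζ, hζ, huniq⟩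
    exact ⟨ζ, mem_of_pair hζ, hζ, fun ζ' _ => huniq ζ'⟩
  · rintro ⟨ζ, -, hζ, huniq⟩
    exact ⟨ζ, hζ, fun ζ' hζ' => huniq ζ' (mem_of_pair hζ') hζ'⟩

namespace IsDeltaZero

variable {n : ℕ} {P Q : (Fin n → ZFSet.{u}) → Prop}

theorem congr (hP : IsDeltaZero P) (h : ∀ v, P v ↔ Q v) : IsDeltaZero Q :=
  (funext fun v => propext (h v) : P = Q) ▸ hP

theorem not (hP : IsDeltaZero P) : IsDeltaZero fun v => ¬ P v :=
  hP.imp falsum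

theorem and (hP : IsDeltaZero P) (hQ : IsDeltaZero Q) : IsDeltaZero fun v => P v ∧ Q v :=
  (hP.imp hQ.not).not.congr fun _ => by tauto

theorem or (hP : IsDeltaZero P) (hQ : IsDeltaZero Q) : IsDeltaZero fun v => P v ∨ Q v :=
  (hP.not.imp hQ).congr fun _ => by tauto

theorem bex (i : Fin n) {Q : (Fin n → ZFSet.{u}) → ZFSet.{u} → Prop}
    (hQ : IsDeltaZero fun w : Fin (n + 1) → ZFSet.{u} => Q (Fin.init w) (w (Fin.last n))) :
    IsDeltaZero fun v => ∃ x ∈ v i, Q v x :=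
  (ball i (Q := fun v x => ¬ Q v x) hQ.not).not.congr fun _ => by push Not; rfl

theorem eq_upair (i j k : Fin n) :
    IsDeltaZero fun v : Fin n → ZFSet.{u} => v i = {v j, v k} := by
  have hbounded : IsDeltaZero fun v : Fin n → ZFSet.{u} =>
      (v j ∈ v i ∧ v k ∈ v i) ∧ ∀ x ∈ v i, x = v j ∨ x = v k :=
    ((mem j i).and (mem k i)).and (ball i ((eq _ j.castSucc).or (eq _ k.castSucc)))
  refine hbounded.congr fun v => ?_
  rw [ZFSet.ext_iff]
  simp only [ZFSet.mem_pair]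
  grind

theorem eq_pair (i j k : Fin n) :
    IsDeltaZero fun v : Fin n → ZFSet.{u} => v i = ZFSet.pair (v j) (v k) := by
  have hbounded : IsDeltaZero fun v : Fin n → ZFSet.{u} =>
      ((∃ x ∈ v i, x = {v j, v j}) ∧ ∃ x ∈ v i, x = {v j, v k}) ∧
        ∀ x ∈ v i, x = {v j, v j} ∨ x = {v j, v k} :=
    ((bex i (eq_upair _ j.castSucc j.castSucc)).and
      (bex i (eq_upair _ j.castSucc k.castSucc))).and
      (ball i ((eq_upair _ j.castSucc j.castSucc).or (eq_upair _ j.castSucc k.castSucc)))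
  refine hbounded.congr fun v => ?_
  rw [ZFSet.pair, ZFSet.ext_iff]
  simp only [ZFSet.mem_pair, ZFSet.pair_eq_singleton]
  grind

theorem pair_mem (i j k : Fin n) :
    IsDeltaZero fun v : Fin n → ZFSet.{u} => ZFSet.pair (v i) (v j) ∈ v k :=
  (bex k (Q := fun v p => p = ZFSet.pair (v i) (v j))
    (eq_pair _ i.castSucc j.castSucc)).congr fun _ => by simp

theorem isOrdinal (i : Fin n) : IsDeltaZero fun v : Fin n → ZFSet.{u} => (v i).IsOrdinal := by
  have hbounded : IsDeltaZero fun v : Fin n → ZFSet.{u} =>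
      (∀ x ∈ v i, ∀ y ∈ x, y ∈ v i) ∧ ∀ x ∈ v i, ∀ y ∈ x, ∀ z ∈ y, z ∈ x :=
    (ball i (ball (Fin.last _) (mem (Fin.last _) i.castSucc.castSucc))).and
      (ball i (ball (Fin.last _) (ball (Fin.last _)
        (mem (Fin.last _) (Fin.last _).castSucc.castSucc))))
  refine hbounded.congr fun v => ⟨fun ⟨htrans, hmem⟩ => ?_, fun h => ?_⟩
  · exact ⟨htrans, fun hzy hyx hx => hmem _ hx _ hyx _ hzy⟩
  · exact ⟨h.isTransitive, fun x hx y hyx z hzy => h.mem_trans' hzy hyx hx⟩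

theorem cofinalFun :
    IsDeltaZero fun v : Fin 3 → ZFSet.{u} => CofinalFun (v 0) (v 1) (v 2) := by
  have hsub : IsDeltaZero fun v : Fin 3 → ZFSet.{u} =>
      ∀ p ∈ v 0, ∃ η ∈ v 1, ∃ ζ ∈ v 2, p = ZFSet.pair η ζ :=
    ball 0 (bex 1 (bex 2 (eq_pair 3 4 5)))
  have hfunc : IsDeltaZero fun v : Fin 3 → ZFSet.{u} => ∀ η ∈ v 1, ∃ ζ ∈ v 2,
      ZFSet.pair η ζ ∈ v 0 ∧ ∀ ζ' ∈ v 2, ZFSet.pair η ζ' ∈ v 0 → ζ' = ζ :=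
    ball 1 (bex 2 ((pair_mem 3 4 0).and (ball 2 ((pair_mem 3 5 0).imp (eq 5 4)))))
  have hcofinal : IsDeltaZero fun v : Fin 3 → ZFSet.{u} => ∀ ξ ∈ v 2, ∃ η ∈ v 1, ∃ ζ ∈ v 2,
      ZFSet.pair η ζ ∈ v 0 ∧ (ξ ∈ ζ ∨ ξ = ζ) :=
    ball 2 (bex 1 (bex 2 ((pair_mem 4 5 0).and ((mem 3 5).or (eq 3 5)))))
  exact (hsub.and (hfunc.and hcofinal)).congr fun _ => cofinalFun_iff_bounded.symm

theorem exists_absolute_formula (hP : IsDeltaZero P) :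
    ∃ φ : setL.BoundedFormula Empty n, ∀ S : Set ZFSet.{u}, IsTransClass S →
      ∀ v : Fin n → ZFSet.{u}, (∀ i, v i ∈ S) → (ZSat S φ v ↔ P v) := by
  induction hP with
  | falsum => exact ⟨.falsum, fun _ _ _ _ => Iff.rfl⟩
  | mem i j =>
    exact ⟨.rel SetMemRel.mem ![.var (.inr i), .var (.inr j)], fun _ _ _ _ => Iff.rfl⟩
  | eq i j => exact ⟨.equal (.var (.inr i)) (.var (.inr j)), fun _ _ _ _ => Iff.rfl⟩
  | imp _ _ ihP ihQ =>
    obtain ⟨φ, hφ⟩ := ihP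
    obtain ⟨ψ, hψ⟩ := ihQ
    exact ⟨.imp φ ψ, fun S hS v hv => imp_congr (hφ S hS v hv) (hψ S hS v hv)⟩
  | @ball n i Q _ ih =>
    obtain ⟨φ, hφ⟩ := ih
    refine ⟨.all (.imp (.rel SetMemRel.mem ![.var (.inr (Fin.last n)), .var (.inr i.castSucc)]) φ),
      fun S hS v hv => ?_⟩
    have hbody (x : ZFSet.{u}) (hx : x ∈ S) : ZSat S φ (Fin.snoc v x) ↔ Q v x := by
      simpa using hφ S hS _ (forall_snoc_mem hv hx)
    change (∀ x ∈ S, (Fin.snoc v x : Fin (n + 1) → ZFSet.{u}) (Fin.last n) ∈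
      (Fin.snoc v x : Fin (n + 1) → ZFSet.{u}) i.castSucc → ZSat S φ (Fin.snoc v x)) ↔ _
    simp only [Fin.snoc_last, Fin.snoc_castSucc]
    exact ⟨fun h x hxi => (hbody x (hS _ (hv i) x hxi)).1 (h x (hS _ (hv i) x hxi) hxi),
      fun h x hx hxi => (hbody x hx).2 (h x hxi)⟩

end IsDeltaZero

theorem IsElem.isDeltaZeroElem {S T : Set ZFSet.{u}} {π : ZFSet.{u} → ZFSet.{u}}
    (hπ : IsElem S T π) (hS : IsTransClass S) (hT : IsTransClass T) : IsDeltaZeroElem S π := by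
  intro n P hP v hv
  obtain ⟨φ, hφ⟩ := hP.exists_absolute_formula
  rw [← hφ S hS v hv, hπ.2 n φ v hv, hφ T hT _ fun i => hπ.1 _ (hv i)]

namespace IsDeltaZeroElem

variable {S : Set ZFSet.{u}} {π : ZFSet.{u} → ZFSet.{u}}

theorem map_mem (hπ : IsDeltaZeroElem S π) {x y : ZFSet.{u}} (hx : x ∈ S) (hy : y ∈ S)
    (hxy : x ∈ y) : π x ∈ π y :=
  (hπ (.mem 0 1) ![x, y] (by simp [Fin.forall_fin_succ, hx, hy])).1 hxy

theorem map_isOrdinal (hπ : IsDeltaZeroElem S π) {x : ZFSet.{u}} (hx : x ∈ S)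
    (hxo : x.IsOrdinal) : (π x).IsOrdinal :=
  (hπ (.isOrdinal 0) ![x] (by simp [hx])).1 hxo

theorem map_cofinalFun (hπ : IsDeltaZeroElem S π) {f β α : ZFSet.{u}} (hf : f ∈ S) (hβ : β ∈ S)
    (hα : α ∈ S) (h : CofinalFun f β α) : CofinalFun (π f) (π β) (π α) :=
  (hπ .cofinalFun ![f, β, α] (by simp [Fin.forall_fin_succ, hf, hβ, hα])).1 h

theorem map_values_mem (hπ : IsDeltaZeroElem S π) {f β α δ : ZFSet.{u}} (hf : f ∈ S) (hβ : β ∈ S)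
    (hα : α ∈ S) (hδ : δ ∈ S) (h : ∀ η ∈ β, ∀ ζ ∈ α, ZFSet.pair η ζ ∈ f → ζ ∈ δ) :
    ∀ η ∈ π β, ∀ ζ ∈ π α, ZFSet.pair η ζ ∈ π f → ζ ∈ π δ := by
  have hΔ : IsDeltaZero fun v : Fin 4 → ZFSet.{u} =>
      ∀ η ∈ v 1, ∀ ζ ∈ v 2, ZFSet.pair η ζ ∈ v 0 → ζ ∈ v 3 :=
    .ball 1 (.ball 2 ((IsDeltaZero.pair_mem 4 5 0).imp (.mem 5 3)))
  exact (hπ hΔ ![f, β, α, δ] (by simp [Fin.forall_fin_succ, hf, hβ, hα, hδ])).1 h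

end IsDeltaZeroElem

theorem HasDeltaZeroSeparation.inter_prod_mem {S : Set ZFSet.{u}} (hS : HasDeltaZeroSeparation S)
    {f a b : ZFSet.{u}} (hf : f ∈ S) (ha : a ∈ S) (hb : b ∈ S) : f ∩ a.prod b ∈ S := by
  have hΔ : IsDeltaZero fun v : Fin 3 → ZFSet.{u} => ∃ x ∈ v 0, ∃ y ∈ v 1, v 2 = ZFSet.pair x y :=
    .bex 0 (.bex 1 (.eq_pair 2 3 4))
  convert hS hΔ ![a, b] (by simp [Fin.forall_fin_succ, ha, hb]) f hf using 1
  ext p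
  rw [ZFSet.mem_inter, ZFSet.mem_prod, ZFSet.mem_sep]
  rfl

namespace ModelsZFCminus

variable {S : Set ZFSet.{u}}

theorem hasDeltaZeroSeparation (hS : ModelsZFCminus S) : HasDeltaZeroSeparation S := by
  intro n P hP p hp a ha
  obtain ⟨φ, hφ⟩ := hP.exists_absolute_formula
  obtain ⟨htrans, -, -, -, -, hsep, -⟩ := hS
  obtain ⟨b, hb, hmem⟩ := hsep n φ p hp a ha
  convert hb
  ext y
  rw [ZFSet.mem_sep, hmem]
  exact and_congr_right fun hy => (hφ S htrans _ (forall_snoc_mem hp (htrans a ha y hy))).symm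

theorem pair_mem (hS : ModelsZFCminus S) {x y : ZFSet.{u}} (hx : x ∈ S) (hy : y ∈ S) :
    ZFSet.pair x y ∈ S := by
  obtain ⟨-, -, hpair, -⟩ := hS
  rw [ZFSet.pair, ← ZFSet.pair_eq_singleton]
  exact hpair _ (hpair x hx x hx) _ (hpair x hx y hy)

theorem image_mem (hS : ModelsZFCminus S) {n : ℕ} {P : (Fin (n + 2) → ZFSet.{u}) → Prop}
    (hP : IsDeltaZero P) {p : Fin n → ZFSet.{u}} (hp : ∀ i, p i ∈ S) {a : ZFSet.{u}} (ha : a ∈ S)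
    {F : ZFSet.{u} → ZFSet.{u}} [ZFSet.Definable₁ F] (hF : ∀ x ∈ a, F x ∈ S)
    (hPF : ∀ x ∈ a, ∀ y, P (Fin.snoc (Fin.snoc p x) y) ↔ y = F x) : ZFSet.image F a ∈ S := by
  obtain ⟨φ, hφ⟩ := hP.exists_absolute_formula
  obtain ⟨htrans, -, -, -, -, -, hrepl, -⟩ := hS
  have hgraph (x : ZFSet.{u}) (hx : x ∈ a) (y : ZFSet.{u}) (hy : y ∈ S) :
      ZSat S φ (Fin.snoc (Fin.snoc p x) y) ↔ y = F x :=
    (hφ S htrans _ (forall_snoc_mem (forall_snoc_mem hp (htrans a ha x hx)) hy)).trans (hPF x hx y)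
  have hvalue (x : ZFSet.{u}) (hx : x ∈ a) (y : ZFSet.{u}) :
      y ∈ S ∧ ZSat S φ (Fin.snoc (Fin.snoc p x) y) ↔ y = F x :=
    ⟨fun h => (hgraph x hx y h.1).1 h.2, fun h =>
      have hy : y ∈ S := h ▸ hF x hx
      ⟨hy, (hgraph x hx y hy).2 h⟩⟩
  obtain ⟨b, hb, hmem⟩ := hrepl n φ p hp a ha fun x hx =>
    ⟨F x, (hvalue x hx _).2 rfl, fun y => (hvalue x hx y).1⟩
  convert hb
  ext y
  rw [ZFSet.mem_image, hmem]
  exact exists_congr fun x => and_congr_right fun hx => eq_comm.trans (hvalue x hx y).symm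

theorem map_id_mem (hS : ModelsZFCminus S) {a : ZFSet.{u}} (ha : a ∈ S) :
    ZFSet.map (fun x => x) a ∈ S :=
  hS.image_mem (p := ![]) (.eq_pair 1 0 0) (fun i => i.elim0) ha
    (fun x hx => hS.pair_mem (hS.1 a ha x hx) (hS.1 a ha x hx)) fun _ _ _ => Iff.rfl

end ModelsZFCminus

theorem cofinalFun_map_id (α : ZFSet.{u}) : CofinalFun (ZFSet.map (fun x => x) α) α α :=
  ⟨ZFSet.map_isFunc.2 fun _ hx => hx,
    fun ξ hξ => ⟨ξ, hξ, ξ, ZFSet.mem_map.2 ⟨ξ, hξ, rfl⟩, .inr rfl⟩⟩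

theorem CofinalFun.exists_isCofOf {S : Set ZFSet.{u}} {f ν α : ZFSet.{u}} (hf : CofinalFun f ν α)
    (hfS : f ∈ S) (hνS : ν ∈ S) (hν : ν.IsOrdinal) : ∃ γ, IsCofOf S α γ := by
  obtain ⟨γ, ⟨hγS, hγ, hγf⟩, hmin⟩ := ZFSet.mem_wf.has_min
    {γ | γ ∈ S ∧ γ.IsOrdinal ∧ ∃ f ∈ S, CofinalFun f γ α} ⟨ν, hνS, hν, f, hfS, hf⟩
  exact ⟨γ, hγS, hγ, hγf, fun ν hνS hν hνf =>
    (hν.notMem_iff_subset hγ).1 (hmin ν ⟨hνS, hν, hνf⟩)⟩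

theorem ModelsZFCminus.exists_isCofOf {S : Set ZFSet.{u}} (hS : ModelsZFCminus S) {α : ZFSet.{u}}
    (hαS : α ∈ S) (hα : α.IsOrdinal) : ∃ γ, IsCofOf S α γ :=
  (cofinalFun_map_id α).exists_isCofOf (hS.map_id_mem hαS) hαS hα

theorem isFunc_inter_prod {f a b c : ZFSet.{u}} (hf : ZFSet.IsFunc a b f) (hca : c ⊆ a) :
    ZFSet.IsFunc c b (f ∩ c.prod b) := by
  refine ⟨fun p hp => (ZFSet.mem_inter.1 hp).2, fun x hx => ?_⟩
  obtain ⟨y, hxy, huniq⟩ := hf.2 x (hca hx)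
  have hy : y ∈ b := (ZFSet.pair_mem_prod.1 (hf.1 hxy)).2
  exact ⟨y, ZFSet.mem_inter.2 ⟨hxy, ZFSet.pair_mem_prod.2 ⟨hx, hy⟩⟩,
    fun y' hy' => huniq y' (ZFSet.mem_inter.1 hy').1⟩

theorem IsCofOf.exists_values_mem {S : Set ZFSet.{u}} {α γ f β : ZFSet.{u}} (hγ : IsCofOf S α γ)
    (hS : IsTransClass S) (hsep : HasDeltaZeroSeparation S) (hαS : α ∈ S) (hα : α.IsOrdinal)
    (hfS : f ∈ S) (hf : ZFSet.IsFunc γ α f) (hβ : β ∈ γ) :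
    ∃ δ ∈ α, ∀ η ∈ β, ∀ ζ ∈ α, ZFSet.pair η ζ ∈ f → ζ ∈ δ := by
  obtain ⟨hγS, hγo, -, hmin⟩ := hγ
  have hβS : β ∈ S := hS γ hγS β hβ
  by_contra! hunbounded
  have hrestrict : CofinalFun (f ∩ β.prod α) β α := by
    refine ⟨isFunc_inter_prod hf (hγo.subset_of_mem hβ), fun ξ hξ => ?_⟩
    obtain ⟨η, hη, ζ, hζ, hηζ, hζξ⟩ := hunbounded ξ hξ
    have hξζ : ξ ⊆ ζ := ((hα.mem hζ).notMem_iff_subset (hα.mem hξ)).1 hζξ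
    exact ⟨η, hη, ζ, ZFSet.mem_inter.2 ⟨hηζ, ZFSet.pair_mem_prod.2 ⟨hη, hζ⟩⟩,
      (((hα.mem hξ).subset_iff_eq_or_mem (hα.mem hζ)).1 hξζ).symm⟩
  have hγβ : γ ⊆ β :=
    hmin β hβS (hγo.mem hβ) ⟨_, hsep.inter_prod_mem hfS hβS hαS, hrestrict⟩
  exact ZFSet.mem_irrefl β (hγβ hβ)

theorem IsSupOf.exists_mem {σ η : ZFSet.{u}} {A : Set ZFSet.{u}} (hσ : IsSupOf σ A)
    (hA : ∀ a ∈ A, a.IsOrdinal) (hη : η ∈ σ) : ∃ a ∈ A, η ∈ a := by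
  by_contra! hbound
  have hηo : η.IsOrdinal := hσ.1.mem hη
  have hση : σ ⊆ η :=
    hσ.2.2 η hηo fun a ha => (hηo.notMem_iff_subset (hA a ha)).1 (hbound a ha)
  exact ZFSet.mem_irrefl η (hση hη)

theorem IsSupOf.unique {σ τ : ZFSet.{u}} {A : Set ZFSet.{u}} (hσ : IsSupOf σ A)
    (hτ : IsSupOf τ A) : σ = τ :=
  subset_antisymm (hσ.2.2 τ hτ.1 hτ.2.1) (hτ.2.2 σ hσ.1 hσ.2.1)

theorem IsDeltaZeroElem.exists_mem_map_of_isCofOf {S : Set ZFSet.{u}}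
    {π : ZFSet.{u} → ZFSet.{u}} (hπ : IsDeltaZeroElem S π) (hS : IsTransClass S)
    (hsep : HasDeltaZeroSeparation S) {α γ ξ : ZFSet.{u}} (hαS : α ∈ S) (hα : α.IsOrdinal)
    (hγ : IsCofOf S α γ) (hcont : IsSupOf (π γ) {y | ∃ β ∈ γ, y = π β}) (hξ : ξ ∈ π α) :
    ∃ δ ∈ α, ξ ∈ π δ := by
  have ⟨hγS, hγo, ⟨f, hfS, hf⟩, _⟩ := hγ
  have hπf : CofinalFun (π f) (π γ) (π α) := hπ.map_cofinalFun hfS hγS hαS hf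
  have hord : ∀ a ∈ {y | ∃ β ∈ γ, y = π β}, a.IsOrdinal := by
    rintro _ ⟨β, hβ, rfl⟩
    exact hπ.map_isOrdinal (hS γ hγS β hβ) (hγo.mem hβ)
  obtain ⟨η, hη, ζ, hηζ, hξζ⟩ := hπf.2 ξ hξ
  obtain ⟨_, ⟨β, hβ, rfl⟩, hηβ⟩ := hcont.exists_mem hord hη
  obtain ⟨δ, hδ, hvalues⟩ := hγ.exists_values_mem hS hsep hαS hα hfS hf.1 hβ
  have hδS : δ ∈ S := hS α hαS δ hδ
  have hζα : ζ ∈ π α := (ZFSet.pair_mem_prod.1 (hπf.1.1 hηζ)).2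
  have hζδ : ζ ∈ π δ :=
    hπ.map_values_mem hfS (hS γ hγS β hβ) hαS hδS hvalues η hηβ ζ hζα hηζ
  refine ⟨δ, hδ, ?_⟩
  rcases hξζ with hξζ | rfl
  · exact (hπ.map_isOrdinal hδS (hα.mem hδ)).mem_trans hξζ hζδ
  · exact hζδ

theorem fixed_point_lemma_general {M : Set ZFSet.{u}} (hM : IsTransClass M)
    (hsep : HasDeltaZeroSeparation M) {π : ZFSet.{u} → ZFSet.{u}} (hπ : IsDeltaZeroElem M π)
    {α γ : ZFSet.{u}} (hαM : α ∈ M) (hα : α.IsOrdinal) (hγ : IsCofOf M α γ)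
    (hcont : IsSupOf (π γ) {y | ∃ β ∈ γ, y = π β}) :
    IsSupOf (π α) {y | ∃ β ∈ α, y = π β} := by
  have hπα : (π α).IsOrdinal := hπ.map_isOrdinal hαM hα
  refine ⟨hπα, ?_, fun ρ _ hρ ξ hξ => ?_⟩
  · rintro _ ⟨β, hβ, rfl⟩
    exact hπα.subset_of_mem (hπ.map_mem (hM α hαM β hβ) hαM hβ)
  · obtain ⟨δ, hδ, hξδ⟩ := hπ.exists_mem_map_of_isCofOf hM hsep hαM hα hγ hcont hξ
    exact hρ (π δ) ⟨δ, hδ, rfl⟩ hξδ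

/-- Let `M` and `N` be transitive models of ZFC⁻ and `π : M → N` elementary.
Suppose `α` is an ordinal of `M` such that `sup π"α = α` and `π` is continuous at `cof^M(α)`.
Then `π(α) = α`. -/
theorem fixed_point_lemma (M N : ZFSet)
    (hM : ModelsZFCminus M.toSet) (hN : ModelsZFCminus N.toSet)
    (π : ZFSet → ZFSet) (hπ : IsElem M.toSet N.toSet π)
    (α : ZFSet) (hαM : α ∈ M) (hα : α.IsOrdinal)
    (hsup : IsSupOf α {y | ∃ β ∈ α, y = π β})
    (hcont : ∀ γ, IsCofOf M.toSet α γ → IsSupOf (π γ) {y | ∃ β ∈ γ, y = π β}) :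
    π α = α := by
  obtain ⟨γ, hγ⟩ := hM.exists_isCofOf hαM hα
  exact (fixed_point_lemma_general hM.1 hM.hasDeltaZeroSeparation (hπ.isDeltaZeroElem hM.1 hN.1)
    hαM hα hγ (hcont γ hγ)).unique hsup
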